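/- Let (X, T) be a dynamical system. The following statements are equivalent: (1) (X, T) is equicontinuous; (2) (K(X), T_K) is equicontinuous; (3) (𝔽₀(X), T_F) is equicontinuous. -/

import Mathlib

open Metric Set TopologicalSpace Filter Function
open scoped Classical

variable {X Y : Type*}

/-- Extended Hausdorff metric on subsets of `X`: the usual Hausdorff distance between
two nonempty sets (or two empty sets), and `diam X` when exactly one of them is empty. -/
noncomputable def eHd (X : Type*) [MetricSpace X] (A B : Set X) : ℝ :=
  if (A.Nonempty ∧ B.Nonempty) ∨ (A = ∅ ∧ B = ∅) then Metric.hausdorffDist A B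
  else Metric.diam (Set.univ : Set X)

/-- The `α`-cut of a fuzzy set. -/
def cut (A : X → ℝ) (α : ℝ) : Set X := {x | α ≤ A x}

/-- The levelwise metric `d_∞` on fuzzy sets. -/
noncomputable def dinf [MetricSpace X] (A B : X → ℝ) : ℝ :=
  sSup {r : ℝ | ∃ α ∈ Set.Ioc (0:ℝ) 1, r = eHd X (cut A α) (cut B α)}

/-- A fuzzy set: an upper semicontinuous function into `[0,1]`. -/
def IsFuzzy [TopologicalSpace X] (A : X → ℝ) : Prop :=
  (∀ x, A x ∈ Set.Icc (0:ℝ) 1) ∧ UpperSemicontinuous A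

/-- `𝔽₀(X)`: nonempty (not identically zero) u.s.c. fuzzy sets. -/
def F0 (X : Type*) [TopologicalSpace X] : Set (X → ℝ) :=
  {A | IsFuzzy A ∧ ∃ x, A x ≠ 0}

/-- `𝔽^{=λ}(X)`: u.s.c. fuzzy sets with maximum value `λ`. -/
def Feq (X : Type*) [TopologicalSpace X] (lam : ℝ) : Set (X → ℝ) :=
  {A | IsFuzzy A ∧ (∃ x, A x = lam) ∧ ∀ x, A x ≤ lam}

/-- `𝔽^{≥λ}(X)`: u.s.c. fuzzy sets attaining a value `≥ λ`. -/
def Fge (X : Type*) [TopologicalSpace X] (lam : ℝ) : Set (X → ℝ) :=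
  {A | IsFuzzy A ∧ ∃ x, lam ≤ A x}

/-- Zadeh's extension of `T`. -/
noncomputable def zadeh (T : X → X) (A : X → ℝ) : X → ℝ :=
  fun x => sSup (A '' (T ⁻¹' {x}))

/-- The induced map `T_K` on the hyperspace of nonempty closed (= compact) subsets. -/
def hyper [TopologicalSpace X] (T : X → X) (hT : Continuous T)
    (A : NonemptyCompacts X) : NonemptyCompacts X :=
  ⟨⟨T '' A, A.isCompact.image hT⟩, A.nonempty.image T⟩

/-- Topological transitivity. -/
def TopTrans [TopologicalSpace Y] (S : Y → Y) : Prop :=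
  ∀ U V : Set Y, IsOpen U → IsOpen V → U.Nonempty → V.Nonempty →
    ∃ n : ℕ, (S^[n] '' U ∩ V).Nonempty

/-- Weak mixing: `S × S` is transitive. -/
def TopWeakMix [TopologicalSpace Y] (S : Y → Y) : Prop :=
  TopTrans (fun p : Y × Y => (S p.1, S p.2))

/-- Topological transitivity of `S` restricted to `C`, for the topology induced by the
(pseudo)metric `ρ`, phrased via metric balls. -/
def TransOn (ρ : Y → Y → ℝ) (S : Y → Y) (C : Set Y) : Prop :=
  ∀ A ∈ C, ∀ B ∈ C, ∀ ε > 0, ∃ n : ℕ, ∃ E ∈ C, ρ E A < ε ∧ ρ (S^[n] E) B < ε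

/-- Weak mixing of `S` restricted to `C`, phrased via metric balls. -/
def WeakMixOn (ρ : Y → Y → ℝ) (S : Y → Y) (C : Set Y) : Prop :=
  ∀ A₁ ∈ C, ∀ A₂ ∈ C, ∀ B₁ ∈ C, ∀ B₂ ∈ C, ∀ ε > 0, ∃ n : ℕ,
    ∃ E₁ ∈ C, ∃ E₂ ∈ C, ρ E₁ A₁ < ε ∧ ρ E₂ A₂ < ε ∧
      ρ (S^[n] E₁) B₁ < ε ∧ ρ (S^[n] E₂) B₂ < ε


/-- Equicontinuity of (the iterates of) a self-map of a metric space. -/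
def EquicontM {Z : Type*} [PseudoMetricSpace Z] (S : Z → Z) : Prop :=
  ∀ ε > 0, ∃ δ > 0, ∀ y z : Z, dist y z < δ → ∀ n : ℕ, dist (S^[n] y) (S^[n] z) < ε

/-- Equicontinuity of `S` restricted to `C`, with respect to the metric `ρ`. -/
def EquicontOn (ρ : Y → Y → ℝ) (S : Y → Y) (C : Set Y) : Prop :=
  ∀ ε > 0, ∃ δ > 0, ∀ A ∈ C, ∀ B ∈ C, ρ A B < δ → ∀ n : ℕ, ρ (S^[n] A) (S^[n] B) < ε


section helpers

lemma hd_image_le {X : Type*} [MetricSpace X] [CompactSpace X] {S : X → X} {δ ε : ℝ}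
    (hε : 0 ≤ ε) (h : ∀ y z : X, dist y z < δ → dist (S y) (S z) ≤ ε)
    {A B : Set X} (hA : A.Nonempty) (hB : B.Nonempty)
    (hAB : hausdorffDist A B < δ) : hausdorffDist (S '' A) (S '' B) ≤ ε := by
  have fin : hausdorffEDist A B ≠ ⊤ :=
    hausdorffEDist_ne_top_of_nonempty_of_bounded hA hB
      (isBounded_of_compactSpace) (isBounded_of_compactSpace)
  apply hausdorffDist_le_of_mem_dist hε
  · rintro _ ⟨x, hx, rfl⟩
    obtain ⟨y, hy, hxy⟩ := exists_dist_lt_of_hausdorffDist_lt hx hAB fin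
    exact ⟨S y, ⟨y, hy, rfl⟩, h _ _ hxy⟩
  · rintro _ ⟨x, hx, rfl⟩
    obtain ⟨y, hy, hxy⟩ := exists_dist_lt_of_hausdorffDist_lt' hx hAB fin
    exact ⟨S y, ⟨y, hy, rfl⟩, h _ _ (by rwa [dist_comm])⟩

lemma fuzzy_cut_closed {X : Type*} [TopologicalSpace X] {A : X → ℝ} (hA : IsFuzzy A) (α : ℝ) :
    IsClosed (cut A α) :=
  upperSemicontinuous_iff_isClosed_preimage.1 hA.2 α

lemma le_zadeh {X : Type*} [TopologicalSpace X] {A : X → ℝ} (hA : IsFuzzy A) (T : X → X) (x : X) :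
    A x ≤ zadeh T A (T x) := by
  apply le_csSup
  · exact ⟨1, by rintro _ ⟨y, _, rfl⟩; exact (hA.1 y).2⟩
  · exact ⟨x, rfl, rfl⟩

lemma zadeh_attained {X : Type*} [MetricSpace X] [CompactSpace X] {T : X → X} (hT : Continuous T)
    (hTs : Function.Surjective T) {A : X → ℝ} (hA : IsFuzzy A) (x : X) :
    ∃ y, T y = x ∧ zadeh T A x = A y := by
  have hc : IsCompact (T ⁻¹' {x}) := (isClosed_singleton.preimage hT).isCompact
  have hne : (T ⁻¹' {x}).Nonempty := hTs x
  obtain ⟨y, hy, hmax⟩ := (hA.2.upperSemicontinuousOn _).exists_isMaxOn hne hc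
  refine ⟨y, hy, ?_⟩
  apply IsGreatest.csSup_eq
  refine ⟨⟨y, hy, rfl⟩, ?_⟩
  rintro _ ⟨z, hz, rfl⟩
  exact hmax hz

lemma cut_zadeh {X : Type*} [MetricSpace X] [CompactSpace X] {T : X → X} (hT : Continuous T)
    (hTs : Function.Surjective T) {A : X → ℝ} (hA : IsFuzzy A) (α : ℝ) :
    cut (zadeh T A) α = T '' cut A α := by
  ext x
  constructor
  · intro hx
    obtain ⟨y, hy, h⟩ := zadeh_attained hT hTs hA x
    exact ⟨y, by change α ≤ A y; rw [← h]; exact hx, hy⟩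
  · rintro ⟨y, hy, rfl⟩
    exact le_trans hy (le_zadeh hA T y)

lemma fuzzy_zadeh {X : Type*} [MetricSpace X] [CompactSpace X] {T : X → X} (hT : Continuous T)
    (hTs : Function.Surjective T) {A : X → ℝ} (hA : IsFuzzy A) : IsFuzzy (zadeh T A) := by
  constructor
  · intro x
    obtain ⟨y, hy, h⟩ := zadeh_attained hT hTs hA x
    rw [h]; exact hA.1 y
  · rw [upperSemicontinuous_iff_isClosed_preimage]
    intro α
    have : IsClosed (cut (zadeh T A) α) := by
      rw [cut_zadeh hT hTs hA]
      exact ((fuzzy_cut_closed hA α).isCompact.image hT).isClosed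
    exact this

lemma cut_zadeh_iter {X : Type*} [MetricSpace X] [CompactSpace X] {T : X → X} (hT : Continuous T)
    (hTs : Function.Surjective T) {A : X → ℝ} (hA : IsFuzzy A) (α : ℝ) (n : ℕ) :
    IsFuzzy ((zadeh T)^[n] A) ∧ cut ((zadeh T)^[n] A) α = T^[n] '' cut A α := by
  induction n with
  | zero => simpa using hA
  | succ n ih =>
    rw [Function.iterate_succ_apply', Function.iterate_succ', Set.image_comp, ← ih.2]
    exact ⟨fuzzy_zadeh hT hTs ih.1, cut_zadeh hT hTs ih.1 α⟩

lemma eHd_le_diam {X : Type*} [MetricSpace X] [CompactSpace X] (A B : Set X) :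
    eHd X A B ≤ diam (univ : Set X) := by
  unfold eHd
  split_ifs with h
  · rcases h with ⟨hA, hB⟩ | ⟨rfl, rfl⟩
    · refine (hausdorffDist_le_diam hA isBounded_of_compactSpace hB
        isBounded_of_compactSpace).trans (diam_mono (subset_univ _) isBounded_of_compactSpace)
    · simp [diam_nonneg]
  · exact le_rfl

lemma eHd_le_dinf {X : Type*} [MetricSpace X] [CompactSpace X] (A B : X → ℝ) {α : ℝ}
    (hα : α ∈ Set.Ioc (0:ℝ) 1) : eHd X (cut A α) (cut B α) ≤ dinf A B := by
  apply le_csSup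
  · exact ⟨diam univ, by rintro _ ⟨β, _, rfl⟩; exact eHd_le_diam _ _⟩
  · exact ⟨α, hα, rfl⟩

lemma hyper_iter {X : Type*} [MetricSpace X] (T : X → X) (hT : Continuous T)
    (A : NonemptyCompacts X) (n : ℕ) :
    (((hyper T hT)^[n] A : NonemptyCompacts X) : Set X) = T^[n] '' (A : Set X) := by
  induction n with
  | zero => simp
  | succ n ih =>
    rw [Function.iterate_succ_apply', Function.iterate_succ', Set.image_comp, ← ih]
    rfl

lemma hd_singleton {X : Type*} [MetricSpace X] (x y : X) :
    hausdorffDist ({x} : Set X) {y} = dist x y := by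
  simp [hausdorffDist, dist_edist]

/-- Characteristic function of a point. -/
noncomputable def ptFuzzy {X : Type*} (x : X) : X → ℝ := fun y => if y = x then 1 else 0

lemma cut_pt {X : Type*} (x : X) {α : ℝ} (hα : α ∈ Set.Ioc (0:ℝ) 1) :
    cut (ptFuzzy x) α = {x} := by
  ext y
  by_cases h : y = x
  · simp [cut, ptFuzzy, h, hα.2]
  · simp [cut, ptFuzzy, h, hα.1]

lemma pt_mem {X : Type*} [MetricSpace X] (x : X) : ptFuzzy x ∈ F0 X := by
  refine ⟨⟨fun y => ?_, ?_⟩, x, by simp [ptFuzzy]⟩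
  · unfold ptFuzzy; split_ifs <;> simp
  · rw [upperSemicontinuous_iff_isClosed_preimage]
    intro α
    change IsClosed (cut (ptFuzzy x) α)
    rcases le_or_gt α 0 with h | h
    · convert isClosed_univ
      ext y
      simp only [cut, ptFuzzy, mem_ofPred_eq, mem_univ, iff_true]
      split_ifs <;> linarith
    · rcases le_or_gt α 1 with h1 | h1
      · rw [cut_pt x ⟨h, h1⟩]; exact isClosed_singleton
      · convert isClosed_empty
        ext y
        simp only [cut, ptFuzzy, mem_ofPred_eq, mem_empty_iff_false, iff_false, not_le]
        split_ifs <;> linarith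

lemma dinf_eq_of_cut {X : Type*} [MetricSpace X] {A B : X → ℝ} {x y : X}
    (hA : ∀ α ∈ Set.Ioc (0:ℝ) 1, cut A α = {x}) (hB : ∀ α ∈ Set.Ioc (0:ℝ) 1, cut B α = {y}) :
    dinf A B = dist x y := by
  have : {r : ℝ | ∃ α ∈ Set.Ioc (0:ℝ) 1, r = eHd X (cut A α) (cut B α)} = {dist x y} := by
    ext r
    have key : ∀ α ∈ Set.Ioc (0:ℝ) 1, eHd X (cut A α) (cut B α) = dist x y := by
      intro α hα
      rw [hA α hα, hB α hα, eHd, if_pos (Or.inl ⟨by simp, by simp⟩), hd_singleton]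
    constructor
    · rintro ⟨α, hα, rfl⟩
      exact key α hα
    · rintro rfl
      exact ⟨1, by simp, (key 1 (by simp)).symm⟩
  rw [dinf, this, csSup_singleton]

end helpers

/-- Equicontinuity of `(X,T)`, of `(K(X), T_K)` and of the Zadeh extension on `𝔽₀(X)`
are all equivalent. -/
theorem equicontinuous_tfae {X : Type*} [MetricSpace X] [CompactSpace X] [Nontrivial X]
    (T : X → X) (hT : Continuous T) (hTs : Function.Surjective T) :
    List.TFAE
      [EquicontM T,
       EquicontM (hyper T hT),
       EquicontOn dinf (zadeh T) (F0 X)] := by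
  have h12 : EquicontM T → EquicontM (hyper T hT) := by
    intro h ε hε
    obtain ⟨δ, hδ, H⟩ := h (ε / 2) (by positivity)
    refine ⟨δ, hδ, fun A B hAB n => ?_⟩
    rw [NonemptyCompacts.dist_eq] at hAB ⊢
    rw [hyper_iter, hyper_iter]
    have := hd_image_le (S := T^[n]) (ε := ε / 2) (by positivity)
      (fun y z hyz => (H y z hyz n).le) A.nonempty B.nonempty hAB
    linarith
  have h21 : EquicontM (hyper T hT) → EquicontM T := by
    intro h ε hε
    obtain ⟨δ, hδ, H⟩ := h ε hε
    refine ⟨δ, hδ, fun x y hxy n => ?_⟩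
    have := H {x} {y} (by
      rw [NonemptyCompacts.dist_eq]
      simpa [hd_singleton] using hxy) n
    rw [NonemptyCompacts.dist_eq, hyper_iter, hyper_iter] at this
    simpa [hd_singleton] using this
  have h13 : EquicontM T → EquicontOn dinf (zadeh T) (F0 X) := by
    intro h ε hε
    obtain ⟨δ, hδ, H⟩ := h (ε / 2) (by positivity)
    have hd : 0 < diam (univ : Set X) :=
      diam_pos nontrivial_univ isBounded_of_compactSpace
    refine ⟨min δ (diam (univ : Set X)), lt_min hδ hd, fun A hA B hB hAB n => ?_⟩
    have : dinf ((zadeh T)^[n] A) ((zadeh T)^[n] B) ≤ ε / 2 := by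
      unfold dinf
      refine csSup_le ?_ ?_
      · exact ⟨_, 1, by simp, rfl⟩
      rintro _ ⟨α, hα, rfl⟩
      rw [(cut_zadeh_iter hT hTs hA.1 α n).2, (cut_zadeh_iter hT hTs hB.1 α n).2]
      have hlt := (eHd_le_dinf A B hα).trans_lt hAB
      by_cases hc : ((cut A α).Nonempty ∧ (cut B α).Nonempty) ∨ (cut A α = ∅ ∧ cut B α = ∅)
      · rw [eHd, if_pos hc] at hlt
        rcases hc with ⟨h1, h2⟩ | ⟨h1, h2⟩
        · rw [eHd, if_pos (Or.inl ⟨h1.image _, h2.image _⟩)]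
          exact hd_image_le (by positivity) (fun y z hyz => (H y z hyz n).le) h1 h2
            (hlt.trans_le (min_le_left _ _))
        · rw [h1, h2]
          simp only [image_empty, eHd, and_self, or_true, if_true, hausdorffDist_self_zero]
          positivity
      · rw [eHd, if_neg hc] at hlt
        exact absurd (hlt.trans_le (min_le_right _ _)) (lt_irrefl _)
    linarith
  have h31 : EquicontOn dinf (zadeh T) (F0 X) → EquicontM T := by
    intro h ε hε
    obtain ⟨δ, hδ, H⟩ := h ε hε
    refine ⟨δ, hδ, fun x y hxy n => ?_⟩
    have := H _ (pt_mem x) _ (pt_mem y) (by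
      rw [dinf_eq_of_cut (fun α hα => cut_pt x hα) (fun α hα => cut_pt y hα)]
      exact hxy) n
    have hp : ∀ z : X, ∀ α ∈ Set.Ioc (0:ℝ) 1,
        cut ((zadeh T)^[n] (ptFuzzy z)) α = {T^[n] z} := by
      intro z α hα
      rw [(cut_zadeh_iter hT hTs (pt_mem z).1 α n).2, cut_pt z hα, image_singleton]
    rwa [dinf_eq_of_cut (hp x) (hp y)] at this
  tfae_have 1 → 2 := h12
  tfae_have 2 → 1 := h21
  tfae_have 1 → 3 := h13
  tfae_have 3 → 1 := h31
  tfae_finish
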